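/- Let p be an odd prime, t ∈ F_p nonzero, and ψ ∈ SO(g_t) with characteristic polynomial x² + (2−v)x + 1 where v ∈ F_p is nonzero. Then v is a square in F_p if and only if |SO(g_t)| / ord(ψ) is even. -/

import Mathlib

/-- The special orthogonal group of the binary quadratic form
`g_t(x,y) = x² - t y²` over `𝔽_p`: invertible 2×2 matrices of determinant 1
preserving the form. -/
def SOgt (p : ℕ) [Fact p.Prime] (t : ZMod p) :
    Subgroup (Matrix (Fin 2) (Fin 2) (ZMod p))ˣ where
  carrier := {M | ((M : Matrix (Fin 2) (Fin 2) (ZMod p)).det = 1 ∧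
    ∀ v : Fin 2 → ZMod p,
      ((M : Matrix (Fin 2) (Fin 2) (ZMod p)).mulVec v 0) ^ 2
        - t * ((M : Matrix (Fin 2) (Fin 2) (ZMod p)).mulVec v 1) ^ 2
      = (v 0) ^ 2 - t * (v 1) ^ 2)}
  one_mem' := by
    constructor
    · simp
    · intro v; simp
  mul_mem' := by
    rintro A B ⟨hA, hAQ⟩ ⟨hB, hBQ⟩
    constructor
    · simp [Matrix.det_mul, hA, hB]
    · intro v
      rw [Units.val_mul, ← Matrix.mulVec_mulVec]
      rw [hAQ, hBQ]
  inv_mem' := by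
    rintro M ⟨hM, hMQ⟩
    have h : ((M⁻¹ : (Matrix (Fin 2) (Fin 2) (ZMod p))ˣ) : Matrix (Fin 2) (Fin 2) (ZMod p))
        * (M : Matrix (Fin 2) (Fin 2) (ZMod p)) = 1 := by
      rw [← Units.val_mul, inv_mul_cancel, Units.val_one]
    constructor
    · have := congrArg Matrix.det h
      rwa [Matrix.det_mul, hM, mul_one, Matrix.det_one] at this
    · intro v
      have h1 : (M : Matrix (Fin 2) (Fin 2) (ZMod p)).mulVec
          (((M⁻¹ : (Matrix (Fin 2) (Fin 2) (ZMod p))ˣ) : Matrix (Fin 2) (Fin 2) (ZMod p)).mulVec v) = v := by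
        rw [Matrix.mulVec_mulVec, ← Units.val_mul, mul_inv_cancel, Units.val_one, Matrix.one_mulVec]
      have h2 := hMQ (((M⁻¹ : (Matrix (Fin 2) (Fin 2) (ZMod p))ˣ) : Matrix (Fin 2) (Fin 2) (ZMod p)).mulVec v)
      rw [h1] at h2
      exact h2.symm

theorem SOgt_two_ne (p : ℕ) [Fact p.Prime] (hp : Odd p) : (2 : ZMod p) ≠ 0 := by
  intro h
  have h' : ((2 : ℕ) : ZMod p) = 0 := by exact_mod_cast h
  rw [ZMod.natCast_eq_zero_iff] at h'
  have h1 := Nat.le_of_dvd (by norm_num) h'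
  have h2 := (Fact.out : p.Prime).two_le
  rcases hp with ⟨k, hk⟩
  omega

theorem SOgt_entries (p : ℕ) [Fact p.Prime] (hp : Odd p) (t : ZMod p)
    (M : SOgt p t) : (M.1.1 1 1 = M.1.1 0 0) ∧ (M.1.1 0 1 = t * M.1.1 1 0) ∧
      M.1.1 0 0 ^ 2 - t * M.1.1 1 0 ^ 2 = 1 := by
  have h2 := SOgt_two_ne p hp
  obtain ⟨⟨A, B, h1, h3⟩, hd, hq⟩ := M
  simp only at hd hq ⊢
  have e1 := hq ![1, 0]
  have e2 := hq ![0, 1]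
  have e3 := hq ![1, 1]
  rw [Matrix.det_fin_two] at hd
  simp [Matrix.mulVec, dotProduct, Fin.sum_univ_two] at e1 e2 e3
  generalize A 0 0 = m at *
  generalize A 0 1 = n at *
  generalize A 1 0 = q at *
  generalize A 1 1 = r at *
  have e4 : m * n = t * q * r := by
    apply mul_left_cancel₀ h2
    linear_combination e3 - e1 - e2
  refine ⟨?_, ?_, e1⟩
  · linear_combination (-r) * e1 + q * e4 + m * hd
  · linear_combination (-n) * e1 + m * e4 + t * q * hd

theorem SOgt_ext (p : ℕ) [Fact p.Prime] (hp : Odd p) (t : ZMod p)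
    (M N : SOgt p t) (h0 : M.1.1 0 0 = N.1.1 0 0) (h1 : M.1.1 1 0 = N.1.1 1 0) : M = N := by
  obtain ⟨a1, a2, a3⟩ := SOgt_entries p hp t M
  obtain ⟨b1, b2, b3⟩ := SOgt_entries p hp t N
  apply Subtype.ext
  apply Units.ext
  ext i j
  fin_cases i <;> fin_cases j <;> simp [a1, a2, b1, b2, h0, h1]

theorem SOgt_mk (p : ℕ) [Fact p.Prime] (t c d : ZMod p) (h : c ^ 2 - t * d ^ 2 = 1) :
    ∃ M : SOgt p t, M.1.1 = !![c, t * d; d, c] := by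
  refine ⟨⟨⟨!![c, t * d; d, c], !![c, -(t * d); -d, c], ?_, ?_⟩, ?_, ?_⟩, rfl⟩
  · ext i j
    fin_cases i <;> fin_cases j <;> simp [Matrix.mul_apply, Fin.sum_univ_two] <;>
      first | ring1 | linear_combination h
  · ext i j
    fin_cases i <;> fin_cases j <;> simp [Matrix.mul_apply, Fin.sum_univ_two] <;>
      first | ring1 | linear_combination h
  · simp [Matrix.det_fin_two]
    linear_combination h
  · intro v
    simp [Matrix.mulVec, dotProduct, Fin.sum_univ_two]
    linear_combination (v 0 ^ 2 - t * v 1 ^ 2) * h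

theorem SOgt_cyclic (p : ℕ) [Fact p.Prime] (hp : Odd p) (t : ZMod p) (ht : t ≠ 0) :
    IsCyclic (SOgt p t) := by
  let K := AlgebraicClosure (ZMod p)
  let φ : ZMod p →+* K := algebraMap (ZMod p) K
  have hφ : Function.Injective φ := φ.injective
  obtain ⟨s, hs⟩ := IsAlgClosed.exists_pow_nat_eq (φ t) (n := 2) (by norm_num)
  have h2 : (2 : K) ≠ 0 := by
    have := (map_ne_zero φ).2 (SOgt_two_ne p hp)
    rwa [map_ofNat] at this
  have hs0 : s ≠ 0 := by
    rintro rfl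
    apply (map_ne_zero φ).2 ht
    rw [← hs]; simp
  let f : SOgt p t →* K :=
    { toFun := fun M => φ (M.1.1 0 0) + φ (M.1.1 1 0) * s
      map_one' := by simp
      map_mul' := by
        intro M N
        obtain ⟨a1, a2, a3⟩ := SOgt_entries p hp t M
        simp only [Subgroup.coe_mul, Units.val_mul, Matrix.mul_apply, Fin.sum_univ_two, a1, a2,
          map_add, map_mul, ← hs]
        ring }
  refine isCyclic_of_injective_ringHom f ?_
  intro M N h
  obtain ⟨a1, a2, a3⟩ := SOgt_entries p hp t M
  obtain ⟨b1, b2, b3⟩ := SOgt_entries p hp t N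
  replace h : φ (M.1.1 0 0) + φ (M.1.1 1 0) * s = φ (N.1.1 0 0) + φ (N.1.1 1 0) * s := h
  replace a3 := congrArg φ a3
  replace b3 := congrArg φ b3
  simp only [map_sub, map_mul, map_pow, map_one, ← hs] at a3 b3
  have h' : φ (M.1.1 0 0) - φ (M.1.1 1 0) * s = φ (N.1.1 0 0) - φ (N.1.1 1 0) * s := by
    have hne : φ (M.1.1 0 0) + φ (M.1.1 1 0) * s ≠ 0 := by
      intro h0
      apply one_ne_zero (α := K)
      linear_combination (φ (M.1.1 0 0) - φ (M.1.1 1 0) * s) * h0 - a3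
    apply mul_left_cancel₀ hne
    linear_combination a3 - b3 + (-φ (N.1.1 0 0) + φ (N.1.1 1 0) * s) * h
  apply SOgt_ext p hp t
  · apply hφ
    apply mul_left_cancel₀ h2
    linear_combination h + h'
  · apply hφ
    apply mul_left_cancel₀ h2
    apply mul_right_cancel₀ hs0
    linear_combination h - h'

theorem SOgt_even (p : ℕ) [Fact p.Prime] (hp : Odd p) (t : ZMod p) :
    Even (Nat.card (SOgt p t)) := by
  obtain ⟨M, hM⟩ := SOgt_mk p t (-1) 0 (by ring)
  have ho : orderOf M = 2 := by
    apply orderOf_eq_prime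
    · apply SOgt_ext p hp t <;> simp [pow_two, hM]
    · intro h
      rw [h] at hM
      have := congrFun (congrFun hM 0) 0
      simp at this
      apply SOgt_two_ne p hp
      linear_combination this
  have := orderOf_dvd_natCard M
  rw [ho] at this
  exact even_iff_two_dvd.2 this

theorem cyclic_isSquare_iff {G : Type*} [Group G] [Finite G] [IsCyclic G]
    (h : Even (Nat.card G)) (x : G) : IsSquare x ↔ Even (Nat.card G / orderOf x) := by
  obtain ⟨g, hg⟩ := IsCyclic.exists_generator (α := G)
  have hn : orderOf g = Nat.card G := orderOf_eq_card_of_forall_mem_zpowers hg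
  have hpos : 0 < Nat.card G := Nat.card_pos
  have hex : ∀ y : G, ∃ k : ℕ, g ^ k = y := fun y => by
    have := hg y
    rw [← mem_powers_iff_mem_zpowers] at this
    exact this
  have key : ∀ k : ℕ, Nat.card G / orderOf (g ^ k) = Nat.gcd (Nat.card G) k := by
    intro k
    rw [orderOf_pow, hn]
    exact Nat.div_div_self (Nat.gcd_dvd_left _ _) hpos.ne'
  constructor
  · rintro ⟨y, rfl⟩
    obtain ⟨j, rfl⟩ := hex y
    rw [← pow_add, key, even_iff_two_dvd]
    exact Nat.dvd_gcd h.two_dvd (by omega)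
  · obtain ⟨k, rfl⟩ := hex x
    rw [key, even_iff_two_dvd]
    intro hk
    obtain ⟨j, rfl⟩ := hk.trans (Nat.gcd_dvd_right _ _)
    exact ⟨g ^ j, by rw [← pow_add]; congr 1; omega⟩

open Polynomial in
/-- For `ψ ∈ SO(g_t)` with characteristic polynomial `x² + (2 - v)x + 1`, `v ≠ 0`,
`v` is a square iff `|SO(g_t)| / ord(ψ)` is even. -/
theorem SOgt_square_iff_index_even (p : ℕ) [Fact p.Prime] (hp : Odd p)
    (t : ZMod p) (ht : t ≠ 0) (v : ZMod p) (hv : v ≠ 0) (ψ : SOgt p t)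
    (hchar : ((ψ : (Matrix (Fin 2) (Fin 2) (ZMod p))ˣ) :
        Matrix (Fin 2) (Fin 2) (ZMod p)).charpoly = X ^ 2 + C (2 - v) * X + 1) :
    IsSquare v ↔ Even (Nat.card (SOgt p t) / orderOf ψ) := by
  have h2 := SOgt_two_ne p hp
  have := SOgt_cyclic p hp t ht
  rw [← cyclic_isSquare_iff (SOgt_even p hp t) ψ]
  obtain ⟨a1, a2, a3⟩ := SOgt_entries p hp t ψ
  have htr : v = 2 * ψ.1.1 0 0 + 2 := by
    rw [Matrix.charpoly_fin_two] at hchar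
    have := congrArg (fun q => Polynomial.coeff q 1) hchar
    simp [Matrix.trace_fin_two, a1, Polynomial.coeff_X, Polynomial.coeff_one,
      Polynomial.coeff_C, Polynomial.coeff_X_pow] at this
    linear_combination this
  constructor
  · rintro ⟨w, hw⟩
    have hw0 : w ≠ 0 := by
      rintro rfl
      simp at hw
      exact hv hw
    have ha : ψ.1.1 0 0 = w * w / 2 - 1 := by
      field_simp
      linear_combination hw - htr
    have hb : t * ψ.1.1 1 0 ^ 2 = (w * w / 2 - 1) ^ 2 - 1 := by
      rw [← ha]; linear_combination -a3
    obtain ⟨M, hM⟩ := SOgt_mk p t (w / 2) (ψ.1.1 1 0 / w) (by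
      have : t * (ψ.1.1 1 0 / w) ^ 2 = ((w * w / 2 - 1) ^ 2 - 1) / w ^ 2 := by
        rw [← hb]; field_simp
      rw [this]
      field_simp
      ring)
    refine ⟨M, ?_⟩
    apply SOgt_ext p hp t
    · have : t * (ψ.1.1 1 0 / w) * (ψ.1.1 1 0 / w) = ((w * w / 2 - 1) ^ 2 - 1) / w ^ 2 := by
        rw [← hb]; field_simp
      simp [hM, Matrix.mul_apply, Fin.sum_univ_two]
      rw [this, ha]
      field_simp
      ring
    · simp [hM, Matrix.mul_apply, Fin.sum_univ_two]
      field_simp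
      ring
  · rintro ⟨M, rfl⟩
    obtain ⟨b1, b2, b3⟩ := SOgt_entries p hp t M
    refine ⟨2 * M.1.1 0 0, ?_⟩
    rw [htr]
    simp only [Subgroup.coe_mul, Units.val_mul, Matrix.mul_apply, Fin.sum_univ_two, b2]
    linear_combination -2 * b3
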